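/- Let H be a complex Hilbert space and let T be a bounded linear operator on H. Then T is centered (i.e. the operators in the family {T^n(T^n)* : n ≥ 1} ∪ {(T^n)*T^n : n ≥ 1} mutually commute) if and only if |T^n| commutes with |T*| for every n ≥ 1. -/

import Mathlib

set_option synthInstance.maxHeartbeats 1000000
set_option maxHeartbeats 1000000

open ContinuousLinearMap

/-- `opAbs T = |T| = (T*T)^(1/2)`, the positive square root of `T*T` obtained by the
continuous functional calculus. -/
noncomputable def opAbs {H : Type*} [NormedAddCommGroup H] [InnerProductSpace ℂ H]
    [CompleteSpace H] (T : H →L[ℂ] H) : H →L[ℂ] H :=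
  CFC.sqrt (adjoint T * T)

/-- An operator `T` is centered if the operators in the family
`{T^n (T^n)* : n ≥ 1} ∪ {(T^n)* T^n : n ≥ 1}` mutually commute. -/
def Centered {H : Type*} [NormedAddCommGroup H] [InnerProductSpace ℂ H]
    [CompleteSpace H] (T : H →L[ℂ] H) : Prop :=
  ∀ m n : ℕ, 1 ≤ m → 1 ≤ n →
    Commute (T ^ m * adjoint (T ^ m)) (T ^ n * adjoint (T ^ n)) ∧
    Commute (adjoint (T ^ m) * T ^ m) (adjoint (T ^ n) * T ^ n) ∧
    Commute (T ^ m * adjoint (T ^ m)) (adjoint (T ^ n) * T ^ n)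

/-!
Write `Aₙ = (Tⁿ)* Tⁿ` and `Bₙ = Tⁿ (Tⁿ)*`, so that `Aₙ₊₁ = T* Aₙ T` and `Bₙ₊₁ = T Bₙ T*`. Since
taking square roots of positive elements does not affect commutation, the condition on `|Tⁿ|` and
`|T*|` says that every `Aₙ` commutes with `T T*`. Compression `x ↦ T* x T` preserves commutation
among elements commuting with `T T*`, so the `Aₙ` commute with each other. Next, `Bₙ₊₁` commutes
with every `Aₘ` by induction on `n`: the induction hypothesis shows that the commutator of `Aₘ` and
`T Bₙ T*` is killed by compression, and the outer factors `T*` and `T` can be cancelled because `Aₘ`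
commutes with `T T*`. In particular the `Bₙ` commute with `T* T`, so the first step, applied to
`T*`, makes them commute with each other.
-/

section Semigroup

variable {S : Type*} [Semigroup S] {s t x y : S}

theorem commute_mul_mul_of_commute_mul (hxy : Commute x y) (hx : Commute x (t * s))
    (hy : Commute y (t * s)) : Commute (s * x * t) (s * y * t) :=
  calc s * x * t * (s * y * t)
    _ = s * (x * (t * s) * y) * t := by simp only [mul_assoc]
    _ = s * (y * (t * s) * x) * t := by
      rw [hx.eq, mul_assoc (t * s), hxy.eq, ← mul_assoc (t * s), ← hy.eq]
    _ = s * y * t * (s * x * t) := by simp only [mul_assoc]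

theorem commute_star_mul_star_self_iff [StarMul S] :
    Commute (star x) (t * star t) ↔ Commute x (t * star t) := by
  rw [commute_star_comm, star_mul, star_star]

end Semigroup

section StarMonoid

variable {M : Type*} [Monoid M] [StarMul M] {t : M}

theorem star_pow_succ_mul_pow_succ (t : M) (n : ℕ) :
    star (t ^ (n + 1)) * t ^ (n + 1) = star t * (star (t ^ n) * t ^ n) * t := by
  simp only [pow_succ, star_mul, mul_assoc]

theorem pow_succ_mul_star_pow_succ (t : M) (n : ℕ) :
    t ^ (n + 1) * star (t ^ (n + 1)) = t * (t ^ n * star (t ^ n)) * star t := by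
  simpa only [star_pow, star_star] using star_pow_succ_mul_pow_succ (star t) n

theorem commute_star_pow_mul_pow (h : ∀ n, Commute (star (t ^ n) * t ^ n) (t * star t))
    (m n : ℕ) : Commute (star (t ^ m) * t ^ m) (star (t ^ n) * t ^ n) := by
  induction m generalizing n with
  | zero => simp
  | succ m ih =>
    cases n with
    | zero => simp
    | succ n =>
      rw [star_pow_succ_mul_pow_succ, star_pow_succ_mul_pow_succ]
      exact commute_mul_mul_of_commute_mul (ih n) (h m) (h n)

theorem commute_pow_mul_star_pow (h : ∀ n, Commute (t ^ n * star (t ^ n)) (star t * t))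
    (m n : ℕ) : Commute (t ^ m * star (t ^ m)) (t ^ n * star (t ^ n)) := by
  simpa only [star_pow, star_star] using
    commute_star_pow_mul_pow (t := star t) (by simpa only [star_pow, star_star] using h) m n

/-- Centeredness of an element of an arbitrary monoid with involution. For bounded operators on a
Hilbert space this unfolds to `Centered`. -/
def IsCentered (t : M) : Prop :=
  ∀ m n : ℕ, 1 ≤ m → 1 ≤ n →
    Commute (t ^ m * star (t ^ m)) (t ^ n * star (t ^ n)) ∧
    Commute (star (t ^ m) * t ^ m) (star (t ^ n) * t ^ n) ∧
    Commute (t ^ m * star (t ^ m)) (star (t ^ n) * t ^ n)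

end StarMonoid

section NonUnitalCStarRing

variable {R : Type*} [NonUnitalNormedRing R] [StarRing R] [CStarRing R] {a b t x y z : R}

theorem star_mul_mul_eq_zero_of_commute (ha : Commute a (t * star t)) (hx : star t * x = 0) :
    star t * (a * x) = 0 := by
  rw [← CStarRing.star_mul_self_eq_zero_iff]
  calc star (star t * (a * x)) * (star t * (a * x))
    _ = star x * star a * (t * star t * a) * x := by simp only [star_mul, star_star, mul_assoc]
    _ = star x * star a * a * t * (star t * x) := by simp only [← ha.eq, mul_assoc]
    _ = 0 := by rw [hx, mul_zero]

-- The difference `x` of the two sides lies in the right annihilator of `star t`, which is invariant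
-- under `star a`; as `x` is also built from `t` and `a * t`, this gives `star x * x = 0`.
theorem mul_mul_eq_mul_of_commute (ha : Commute a (t * star t))
    (h : star t * (a * t * y) = star t * (t * z)) : a * t * y = t * z := by
  obtain ⟨x, hx⟩ : ∃ x, x = a * t * y - t * z := ⟨_, rfl⟩
  have h_annihilates : star t * x = 0 := by rw [hx, mul_sub, h, sub_self]
  have h_invariant : star t * (star a * x) = 0 :=
    star_mul_mul_eq_zero_of_commute (commute_star_mul_star_self_iff.2 ha) h_annihilates
  rw [← sub_eq_zero, ← hx, ← CStarRing.star_mul_self_eq_zero_iff]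
  calc star x * x
    _ = star y * (star t * (star a * x)) - star z * (star t * x) := by
      nth_rewrite 1 [hx]
      simp only [star_sub, star_mul, sub_mul, mul_assoc]
    _ = 0 := by rw [h_invariant, h_annihilates, mul_zero, mul_zero, sub_zero]

theorem commute_mul_mul_star (ha : Commute a (t * star t)) (hb : Commute b (star t * t))
    (hab : Commute b (star t * a * t)) : Commute a (t * b * star t) := by
  have h_compressed : star t * a * t * (star t * t) = star t * t * (star t * a * t) := by
    simpa only [mul_assoc] using congrArg (star t * · * t) ha.eq
  have h_cancel_left : a * t * (b * star t * t) = t * (b * star t * a * t) := by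
    apply mul_mul_eq_mul_of_commute ha
    calc star t * (a * t * (b * star t * t))
      _ = star t * a * t * (b * (star t * t)) := by simp only [mul_assoc]
      _ = star t * t * (b * (star t * a * t)) := by
        rw [hb.eq, hab.eq, ← mul_assoc, h_compressed, mul_assoc]
      _ = star t * (t * (b * star t * a * t)) := by simp only [mul_assoc]
  have h_cancel_right : star a * t * (star b * star t) = t * (star b * star t * star a) := by
    apply mul_mul_eq_mul_of_commute (commute_star_mul_star_self_iff.2 ha)
    simpa only [star_mul, star_star, mul_assoc] using (congrArg star h_cancel_left).symm
  simpa only [Commute, SemiconjBy, star_mul, star_star, mul_assoc] using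
    (congrArg star h_cancel_right).symm

end NonUnitalCStarRing

section CStarRing

variable {R : Type*} [NormedRing R] [StarRing R] [CStarRing R] {t : R}

theorem commute_pow_mul_star_pow_star_pow_mul_pow
    (h : ∀ n, Commute (star (t ^ n) * t ^ n) (t * star t)) (n m : ℕ) :
    Commute (t ^ n * star (t ^ n)) (star (t ^ m) * t ^ m) := by
  induction n generalizing m with
  | zero => simp
  | succ n ih =>
    rw [pow_succ_mul_star_pow_succ]
    refine (commute_mul_mul_star (h m) ?_ ?_).symm
    · simpa only [pow_one] using ih 1
    · simpa only [star_pow_succ_mul_pow_succ] using ih (m + 1)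

theorem isCentered_iff_forall_commute :
    IsCentered t ↔ ∀ n : ℕ, 1 ≤ n → Commute (star (t ^ n) * t ^ n) (t * star t) := by
  refine ⟨fun h n hn ↦ ?_, fun h m n _ _ ↦ ?_⟩
  · simpa only [pow_one] using (h 1 n le_rfl hn).2.2.symm
  · have h_all (k : ℕ) : Commute (star (t ^ k) * t ^ k) (t * star t) := by
      rcases k.eq_zero_or_pos with rfl | hk
      · simp
      · exact h k hk
    have h_mixed := commute_pow_mul_star_pow_star_pow_mul_pow h_all
    have h_star_mul_self (k : ℕ) : Commute (t ^ k * star (t ^ k)) (star t * t) := by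
      simpa only [pow_one] using h_mixed k 1
    exact ⟨commute_pow_mul_star_pow h_star_mul_self m n, commute_star_pow_mul_pow h_all m n,
      h_mixed m n⟩

end CStarRing

theorem commute_cfcAbs_iff {A : Type*} [NonUnitalCStarAlgebra A] [PartialOrder A]
    [StarOrderedRing A] {a b : A} :
    Commute (CFC.abs a) (CFC.abs b) ↔ Commute (star a * a) (star b * b) := by
  refine ⟨fun h ↦ ?_, fun h ↦ ((h.cfcₙ_nnreal _).symm.cfcₙ_nnreal _).symm⟩
  rw [← CFC.abs_mul_abs a, ← CFC.abs_mul_abs b]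
  exact (h.mul_left h).mul_right (h.mul_left h)

theorem stmt_16_general {A : Type*} [CStarAlgebra A] [PartialOrder A] [StarOrderedRing A] (t : A) :
    IsCentered t ↔ ∀ n : ℕ, 1 ≤ n → Commute (CFC.abs (t ^ n)) (CFC.abs (star t)) := by
  simp only [isCentered_iff_forall_commute, commute_cfcAbs_iff, star_star]

/-- `T` is centered if and only if `|T^n|` commutes with `|T*|` for every `n ≥ 1`. -/
theorem stmt_16 {H : Type*} [NormedAddCommGroup H] [InnerProductSpace ℂ H] [CompleteSpace H]
    (T : H →L[ℂ] H) :
    Centered T ↔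
      ∀ n : ℕ, 1 ≤ n → Commute (opAbs (T ^ n)) (opAbs (adjoint T)) :=
  stmt_16_general T
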